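/- Consider the scalar pointwise-delay equation x(t) = Σ_{k=1}^N c_k x(t − τ_k) with c_k ∈ ℝ and delays τ_1, …, τ_N ∈ (0,1] that are rationally independent. If Σ_{k=1}^N |c_k| ≥ 1, then the equation is not exponentially stable: there exists a sequence of characteristic roots λ_j (solutions of 1 = Σ_k c_k e^{−λ_j τ_k}) with Re λ_j → 0 or Re λ_j ≥ 0. -/

import Mathlib

/-- Rational independence of finitely many reals. -/
def RatIndep {N : ℕ} (τ : Fin N → ℝ) : Prop :=
  ∀ q : Fin N → ℚ, (∑ k, (q k : ℝ) * τ k) = 0 → ∀ k, q k = 0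

/-!
The function `σ ↦ Σ_k |c_k| e^{-σ τ_k}` is at least `1` at `0` and tends to `0` at `+∞`, so it
takes the value `1` at some `σ ≥ 0`. Hence `σ` is a root of the equation whose coefficients are
`c_k` rotated to `|c_k|`, and it is a simple root because the derivative there is `-Σ_k |c_k| τ_k
e^{-σ τ_k} < 0`. Translating the variable by `-it` multiplies the `k`-th coefficient by `e^{i t
τ_k}`. By Kronecker's theorem, obtained here from Weyl's averaging argument on the torus, these
phases come arbitrarily close to the required rotations; by the implicit function theorem the
simple root persists under this perturbation. So the original equation has roots with real part
arbitrarily close to `σ`: if `σ > 0` one of them has positive real part, and if `σ = 0` they form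
a sequence whose real parts tend to `0`.
-/

open Filter MeasureTheory UnitAddTorus
open scoped Topology Real

section Equidistribution

theorem tendsto_intervalAverage_exp_mul {a : ℂ} (ha : a ≠ 0) (hre : a.re ≤ 0) :
    Tendsto (fun T : ℝ ↦ ⨍ t in 0..T, Complex.exp (a * t)) atTop (𝓝 0) := by
  have hbound : ∀ T : ℝ, 0 ≤ T → ‖∫ t in 0..T, Complex.exp (a * t)‖ ≤ 2 / ‖a‖ := by
    intro T hT
    have hexp : ‖Complex.exp (a * T)‖ ≤ 1 := by
      rw [Complex.norm_exp, Complex.re_mul_ofReal, Real.exp_le_one_iff]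
      exact mul_nonpos_of_nonpos_of_nonneg hre hT
    rw [integral_exp_mul_complex ha, norm_div]
    gcongr
    calc ‖Complex.exp (a * T) - Complex.exp (a * (0 : ℝ))‖
        ≤ ‖Complex.exp (a * T)‖ + ‖Complex.exp (a * (0 : ℝ))‖ := norm_sub_le _ _
      _ ≤ 1 + 1 := by gcongr; simp
      _ = 2 := by norm_num
  simp only [interval_average_eq, sub_zero]
  refine tendsto_inv_atTop_zero.zero_smul_isBoundedUnder_le
    (isBoundedUnder_of_eventually_le (a := 2 / ‖a‖) ?_)
  filter_upwards [eventually_ge_atTop 0] with T hT using hbound T hT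

theorem lipschitzWith_intervalAverage_comp {X E : Type*} [TopologicalSpace X] [CompactSpace X]
    [NormedAddCommGroup E] [NormedSpace ℝ E] {γ : ℝ → X} (hγ : Continuous γ) (a b : ℝ) :
    LipschitzWith 1 (fun f : C(X, E) ↦ ⨍ t in a..b, f (γ t)) := by
  refine LipschitzWith.of_dist_le_mul fun f g ↦ ?_
  have hint : ∀ f : C(X, E), IntervalIntegrable (fun t ↦ f (γ t)) volume a b :=
    fun f ↦ (f.continuous.comp hγ).intervalIntegrable _ _
  have hdiff : ‖∫ t in a..b, (f (γ t) - g (γ t))‖ ≤ dist f g * |b - a| :=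
    intervalIntegral.norm_integral_le_of_norm_le_const fun t _ ↦ by
      simpa only [dist_eq_norm] using ContinuousMap.dist_apply_le_dist (f := f) (g := g) (γ t)
  rw [NNReal.coe_one, one_mul, dist_eq_norm, interval_average_eq, interval_average_eq, ← smul_sub,
    ← intervalIntegral.integral_sub (hint f) (hint g), norm_smul, norm_inv, Real.norm_eq_abs]
  calc |b - a|⁻¹ * ‖∫ t in a..b, (f (γ t) - g (γ t))‖
      ≤ |b - a|⁻¹ * (dist f g * |b - a|) := by gcongr
    _ = dist f g * (|b - a|⁻¹ * |b - a|) := by ring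
    _ ≤ dist f g := mul_le_of_le_one_right dist_nonneg inv_mul_le_one

variable {ι : Type*}

/-- The line through `0` with direction `τ` on the torus `ℝ^ι / ℤ^ι`. -/
def torusLine (τ : ι → ℝ) (t : ℝ) : UnitAddTorus ι := fun k ↦ (t * τ k : ℝ)

theorem continuous_torusLine (τ : ι → ℝ) : Continuous (torusLine τ) :=
  continuous_pi fun _ ↦ (AddCircle.continuous_mk' 1).comp (continuous_mul_const _)

variable [Fintype ι]

theorem integral_mFourier_of_ne_zero {n : ι → ℤ} (hn : n ≠ 0) : ∫ x, mFourier n x = 0 := by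
  obtain ⟨i, hi⟩ := Function.ne_iff.1 hn
  simp only [mFourier, ContinuousMap.coe_mk, integral_fintype_prod_volume_eq_prod]
  exact Finset.prod_eq_zero (Finset.mem_univ i)
    (integral_eq_zero_of_add_right_eq_neg (fourier_add_half_inv_index hi one_pos))

theorem mFourier_torusLine (n : ι → ℤ) (τ : ι → ℝ) (t : ℝ) :
    mFourier n (torusLine τ t) =
      Complex.exp (((2 * π * ∑ k, n k * τ k : ℝ) : ℂ) * Complex.I * t) := by
  simp only [mFourier, torusLine, ContinuousMap.coe_mk, fourier_coe_apply, ← Complex.exp_sum]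
  congr 1
  push_cast
  simp only [Finset.mul_sum, Finset.sum_mul]
  exact Finset.sum_congr rfl fun k _ ↦ by ring

theorem sum_intCast_mul_ne_zero {τ : ι → ℝ} (hind : LinearIndependent ℚ τ) {n : ι → ℤ}
    (hn : n ≠ 0) : ∑ k, n k * τ k ≠ 0 := by
  intro h
  refine hn (funext fun k ↦ ?_)
  simpa using Fintype.linearIndependent_iff.1 hind (fun k ↦ (n k : ℚ))
    (by simpa [Rat.smul_def] using h) k

theorem tendsto_intervalAverage_mFourier_torusLine {τ : ι → ℝ} (hind : LinearIndependent ℚ τ)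
    (n : ι → ℤ) :
    Tendsto (fun T : ℝ ↦ ⨍ t in 0..T, mFourier n (torusLine τ t)) atTop
      (𝓝 (∫ x, mFourier n x)) := by
  rcases eq_or_ne n 0 with rfl | hn
  · refine tendsto_const_nhds.congr' ?_
    filter_upwards [eventually_ne_atTop 0] with T hT
    simp [mFourier_zero, interval_average_eq, hT, measureReal_def, volume_pi, Measure.pi_univ]
  · simp only [integral_mFourier_of_ne_zero hn, mFourier_torusLine]
    refine tendsto_intervalAverage_exp_mul ?_ (by simp)
    have hfreq := sum_intCast_mul_ne_zero hind hn
    exact mul_ne_zero (by exact_mod_cast mul_ne_zero Real.two_pi_pos.ne' hfreq) Complex.I_ne_zero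

theorem tendsto_intervalAverage_torusLine_of_mem_span {τ : ι → ℝ} (hind : LinearIndependent ℚ τ)
    {f : C(UnitAddTorus ι, ℂ)} (hf : f ∈ Submodule.span ℂ (Set.range (mFourier (d := ι)))) :
    Tendsto (fun T : ℝ ↦ ⨍ t in 0..T, f (torusLine τ t)) atTop (𝓝 (∫ x, f x)) := by
  induction hf using Submodule.span_induction with
  | mem f hf =>
    obtain ⟨n, rfl⟩ := hf
    exact tendsto_intervalAverage_mFourier_torusLine hind n
  | zero => simp
  | add f g _ _ hf hg =>
    have hint : ∀ (h : C(UnitAddTorus ι, ℂ)) (T : ℝ),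
        IntervalIntegrable (fun t ↦ h (torusLine τ t)) volume 0 T :=
      fun h T ↦ (h.continuous.comp (continuous_torusLine τ)).intervalIntegrable _ _
    simpa [interval_average_eq, intervalIntegral.integral_add (hint f _) (hint g _),
      integral_add (f.continuous.integrable_of_hasCompactSupport (.of_compactSpace _))
        (g.continuous.integrable_of_hasCompactSupport (.of_compactSpace _))] using hf.add hg
  | smul r f _ hf =>
    simpa [interval_average_eq, integral_const_mul, mul_left_comm] using hf.const_mul r

theorem tendsto_intervalAverage_torusLine {τ : ι → ℝ} (hind : LinearIndependent ℚ τ)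
    (f : C(UnitAddTorus ι, ℂ)) :
    Tendsto (fun T : ℝ ↦ ⨍ t in 0..T, f (torusLine τ t)) atTop (𝓝 (∫ x, f x)) := by
  have hclosed : IsClosed {f : C(UnitAddTorus ι, ℂ) |
      Tendsto (fun T : ℝ ↦ ⨍ t in 0..T, f (torusLine τ t)) atTop (𝓝 (∫ x, f x))} :=
    (LipschitzWith.uniformEquicontinuous _ 1 fun T ↦ lipschitzWith_intervalAverage_comp
      (continuous_torusLine τ) 0 T).equicontinuous.isClosed_setOfPred_tendsto
      ((continuous_integral.comp (ContinuousMap.toLp 1 volume ℂ).continuous).congr fun f ↦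
        integral_congr_ae (ContinuousMap.coeFn_toLp volume f))
  refine closure_minimal
    (fun _ ↦ tendsto_intervalAverage_torusLine_of_mem_span hind) hclosed ?_
  rw [← Submodule.topologicalClosure_coe, span_mFourier_closure_eq_top]
  trivial

end Equidistribution

theorem denseRange_torusLine {ι : Type*} [Finite ι] {τ : ι → ℝ} (hind : LinearIndependent ℚ τ) :
    DenseRange (torusLine τ) := by
  have := Fintype.ofFinite ι
  by_contra hdense
  simp only [DenseRange, Dense, not_forall] at hdense
  obtain ⟨x, hx⟩ := hdense
  obtain ⟨f, hf0, hf1, hf⟩ := exists_continuous_zero_one_of_isClosed isClosed_closure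
    isClosed_singleton (Set.disjoint_singleton_right.2 hx)
  have hline : ∀ t, f (torusLine τ t) = 0 := fun t ↦ hf0 (subset_closure ⟨t, rfl⟩)
  have hpos : 0 < ∫ y, f y := f.continuous.integral_pos_of_hasCompactSupport_nonneg_nonzero
    (HasCompactSupport.of_compactSpace _) (fun y ↦ (hf y).1) (x := x) (by simp [hf1 rfl])
  let g : C(UnitAddTorus ι, ℂ) := ⟨fun y ↦ f y, by fun_prop⟩
  have hmean := tendsto_intervalAverage_torusLine hind g
  have hzero : ∫ y, g y = 0 := tendsto_nhds_unique hmean (by simp [g, hline])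
  simp only [g, ContinuousMap.coe_mk, integral_complex_ofReal, Complex.ofReal_eq_zero] at hzero
  exact hpos.ne' hzero

theorem denseRange_circleExp {ι : Type*} [Finite ι] {τ : ι → ℝ} (hind : LinearIndependent ℚ τ) :
    DenseRange (fun (t : ℝ) k ↦ Circle.exp (t * τ k)) := by
  let e : UnitAddTorus ι ≃ₜ (ι → Circle) :=
    Homeomorph.piCongrRight fun _ ↦ AddCircle.homeomorphCircle one_ne_zero
  have he : ∀ t, e (torusLine τ t) = fun k ↦ Circle.exp ((2 * π * t) * τ k) := by
    intro t
    ext k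
    simp [e, torusLine, AddCircle.homeomorphCircle_apply, AddCircle.toCircle_apply_mk, mul_assoc]
  refine (e.surjective.denseRange.comp (denseRange_torusLine hind) e.continuous).mono ?_
  rintro _ ⟨t, rfl⟩
  exact ⟨2 * π * t, (he t).symm⟩

theorem eventually_exists_eq_of_hasDerivAt {𝕜 E : Type*} [RCLike 𝕜] [NormedAddCommGroup E]
    [NormedSpace 𝕜 E] [CompleteSpace E] {F : E × 𝕜 → 𝕜} {a : E} {z F' : 𝕜}
    (hF : ContDiffAt 𝕜 1 F (a, z)) (hderiv : HasDerivAt (fun w ↦ F (a, w)) F' z) (hF' : F' ≠ 0)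
    {s : Set 𝕜} (hs : s ∈ 𝓝 z) : ∀ᶠ b in 𝓝 a, ∃ w ∈ s, F (b, w) = F (a, z) := by
  have hstrict := hF.hasStrictFDerivAt one_ne_zero
  have hpartial : fderiv 𝕜 F (a, z) ∘L .inr 𝕜 E 𝕜 =
      (ContinuousLinearEquiv.unitsEquivAut 𝕜 (Units.mk0 F' hF') : 𝕜 →L[𝕜] 𝕜) := by
    have := hstrict.hasFDerivAt.comp z (hasFDerivAt_prodMk_right a z)
    rw [this.unique hderiv.hasFDerivAt]
    ext
    simp
  have hinv : (fderiv 𝕜 F (a, z) ∘L .inr 𝕜 E 𝕜).IsInvertible := ⟨_, hpartial.symm⟩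
  filter_upwards [hstrict.eventually_apply_implicitFunctionOfProdDomain hinv,
    hstrict.tendsto_implicitFunctionOfProdDomain hinv hs] with b hb hbs
  exact ⟨_, hbs, hb⟩

section ExpSum

variable {ι : Type*} [Fintype ι]

/-- The exponential sum `Σ_k c_k e^{-z τ_k}`; the characteristic roots of
`x(t) = Σ_k c_k x(t - τ_k)` are the solutions of `expSum c τ z = 1`. The coefficients are complex
so that they can be rotated. -/
noncomputable def expSum (c : ι → ℂ) (τ : ι → ℝ) (z : ℂ) : ℂ := ∑ k, c k * Complex.exp (-z * τ k)

theorem contDiff_expSum (τ : ι → ℝ) {n : WithTop ℕ∞} :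
    ContDiff ℂ n (fun p : (ι → ℂ) × ℂ ↦ expSum p.1 τ p.2) := by
  unfold expSum
  fun_prop

theorem hasDerivAt_expSum (c : ι → ℂ) (τ : ι → ℝ) (z : ℂ) :
    HasDerivAt (expSum c τ) (-expSum (fun k ↦ c k * τ k) τ z) z := by
  have hterm : ∀ k, HasDerivAt (fun w : ℂ ↦ c k * Complex.exp (-w * τ k))
      (c k * (Complex.exp (-z * τ k) * (-1 * τ k))) z :=
    fun k ↦ (((hasDerivAt_id z).fun_neg.mul_const _).cexp).const_mul _
  refine (HasDerivAt.fun_sum fun k _ ↦ hterm k).congr_deriv ?_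
  rw [expSum, ← Finset.sum_neg_distrib]
  exact Finset.sum_congr rfl fun k _ ↦ by ring

theorem expSum_ofReal (w τ : ι → ℝ) (σ : ℝ) :
    expSum (fun k ↦ (w k : ℂ)) τ σ = ((∑ k, w k * Real.exp (-σ * τ k) : ℝ) : ℂ) := by
  simp [expSum]

theorem expSum_sub_ofReal_mul_I (c : ι → ℂ) (τ : ι → ℝ) (z : ℂ) (t : ℝ) :
    expSum c τ (z - t * Complex.I) = expSum (fun k ↦ Circle.exp (t * τ k) * c k) τ z := by
  simp only [expSum]
  refine Finset.sum_congr rfl fun k _ ↦ ?_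
  have hexponent : -(z - t * Complex.I) * τ k = -z * τ k + ((t * τ k : ℝ) : ℂ) * Complex.I := by
    push_cast; ring
  rw [hexponent, Complex.exp_add, Circle.coe_exp]
  ring

theorem exists_expSum_eq_of_rotate {c : ι → ℂ} {τ : ι → ℝ} (hind : LinearIndependent ℚ τ)
    (u : ι → Circle) {z₀ : ℂ} (hz₀ : expSum (fun k ↦ u k * c k * τ k) τ z₀ ≠ 0)
    {ε : ℝ} (hε : 0 < ε) :
    ∃ z, expSum c τ z = expSum (fun k ↦ u k * c k) τ z₀ ∧ |z.re - z₀.re| < ε := by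
  let rotate : (ι → Circle) → ι → ℂ := fun v k ↦ v k * c k
  have hrotate : Continuous rotate := by fun_prop
  have hsolvable : ∀ᶠ v in 𝓝 u, ∃ w ∈ Metric.ball z₀ ε,
      expSum (rotate v) τ w = expSum (rotate u) τ z₀ :=
    hrotate.continuousAt.eventually (eventually_exists_eq_of_hasDerivAt
      (contDiff_expSum τ).contDiffAt (hasDerivAt_expSum (rotate u) τ z₀) (neg_ne_zero.2 hz₀)
      (Metric.ball_mem_nhds z₀ hε))
  obtain ⟨_, ⟨t, rfl⟩, w, hw, hwu⟩ :=
    (denseRange_circleExp hind).inter_nhds_nonempty hsolvable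
  refine ⟨w - t * Complex.I, by rw [expSum_sub_ofReal_mul_I]; exact hwu, ?_⟩
  calc |(w - t * Complex.I).re - z₀.re| = |(w - z₀).re| := by simp
    _ ≤ ‖w - z₀‖ := Complex.abs_re_le_norm _
    _ < ε := mem_ball_iff_norm.1 hw

theorem exists_nonneg_sum_mul_exp_eq {w τ : ι → ℝ} (hτ : ∀ k, 0 < τ k) {y : ℝ} (hy : 0 < y)
    (hw : y ≤ ∑ k, w k) : ∃ σ, 0 ≤ σ ∧ ∑ k, w k * Real.exp (-σ * τ k) = y := by
  have hlim : Tendsto (fun σ : ℝ ↦ ∑ k, w k * Real.exp (-σ * τ k)) atTop (𝓝 (∑ k, w k * 0)) :=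
    tendsto_finsetSum _ fun k _ ↦ (Real.tendsto_exp_atBot.comp
      (tendsto_neg_atTop_atBot.atBot_mul_const (hτ k))).const_mul _
  simp only [mul_zero, Finset.sum_const_zero] at hlim
  obtain ⟨b, hb, hb0⟩ :=
    ((hlim.eventually_lt_const hy).and (eventually_ge_atTop 0)).exists
  obtain ⟨σ, hσ, h⟩ := intermediate_value_Icc' hb0
    (f := fun σ : ℝ ↦ ∑ k, w k * Real.exp (-σ * τ k)) (by fun_prop) ⟨hb.le, by simpa using hw⟩
  exact ⟨σ, hσ.1, h⟩

theorem exists_expSum_eq_one_re_near {c : ι → ℂ} {τ : ι → ℝ} (hτ : ∀ k, 0 < τ k)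
    (hind : LinearIndependent ℚ τ) {σ : ℝ} (hσ : ∑ k, ‖c k‖ * Real.exp (-σ * τ k) = 1)
    {ε : ℝ} (hε : 0 < ε) : ∃ z, expSum c τ z = 1 ∧ |z.re - σ| < ε := by
  have hphase : ∀ k, ∃ u : Circle, u * c k = ‖c k‖ := fun k ↦ by
    obtain ⟨u, hu, huc⟩ := Complex.exists_norm_eq_mul_self (c k)
    exact ⟨⟨u, mem_sphere_zero_iff_norm.2 hu⟩, huc.symm⟩
  choose u hu using hphase
  have hderiv : 0 < ∑ k, ‖c k‖ * τ k * Real.exp (-σ * τ k) := by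
    obtain ⟨k, -, hk⟩ := Finset.exists_ne_zero_of_sum_ne_zero (hσ.trans_ne one_ne_zero)
    refine Finset.sum_pos' (fun l _ ↦ by have := hτ l; positivity) ⟨k, Finset.mem_univ k, ?_⟩
    have := norm_pos_iff.2 (fun h : c k = 0 ↦ hk (by simp [h]))
    have := hτ k
    positivity
  obtain ⟨z, hz, hzσ⟩ := exists_expSum_eq_of_rotate hind u (c := c) (z₀ := σ) (by
    simp only [hu, ← Complex.ofReal_mul, expSum_ofReal]
    exact_mod_cast hderiv.ne') hε
  refine ⟨z, ?_, by simpa using hzσ⟩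
  simpa only [hu, expSum_ofReal, hσ, Complex.ofReal_one] using hz

end ExpSum

theorem ratIndep_iff_linearIndependent {N : ℕ} {τ : Fin N → ℝ} :
    RatIndep τ ↔ LinearIndependent ℚ τ := by
  simp only [RatIndep, Fintype.linearIndependent_iff, Rat.smul_def]

theorem stmt19_general {ι : Type*} [Fintype ι] {c : ι → ℂ} {τ : ι → ℝ} (hτ : ∀ k, 0 < τ k)
    (hind : LinearIndependent ℚ τ) (hc : 1 ≤ ∑ k, ‖c k‖) :
    ∃ lam : ℕ → ℂ,
      (∀ j, (1 : ℂ) = ∑ k, c k * Complex.exp (-(lam j) * τ k)) ∧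
      (Tendsto (fun j ↦ (lam j).re) atTop (𝓝 0) ∨ ∀ j, 0 ≤ (lam j).re) := by
  obtain ⟨σ, hσ, hsum⟩ := exists_nonneg_sum_mul_exp_eq hτ one_pos hc
  rcases hσ.eq_or_lt with rfl | hσ
  · choose lam hroot hre using fun j : ℕ ↦
      exists_expSum_eq_one_re_near hτ hind hsum (Nat.one_div_pos_of_nat (n := j))
    refine ⟨lam, fun j ↦ (hroot j).symm, .inl ?_⟩
    exact squeeze_zero_norm (fun j ↦ by simpa using (hre j).le)
      tendsto_one_div_add_atTop_nhds_zero_nat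
  · obtain ⟨z, hroot, hre⟩ := exists_expSum_eq_one_re_near hτ hind hsum hσ
    exact ⟨fun _ ↦ z, fun _ ↦ hroot.symm, .inr fun _ ↦ by linarith [(abs_lt.1 hre).1]⟩

/-- for the scalar equation `x(t) = Σ_k c_k x(t − τ_k)` with rationally
independent delays `τ_k ∈ (0,1]`, if `Σ_k |c_k| ≥ 1` then the equation is not
exponentially stable: there is a sequence of characteristic roots `λ_j` (solutions of
`1 = Σ_k c_k e^{−λ τ_k}`) with `Re λ_j → 0` or `Re λ_j ≥ 0` for all `j`. -/
theorem stmt19 (N : ℕ) (c : Fin N → ℝ) (τ : Fin N → ℝ)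
    (hτ : ∀ k, τ k ∈ Set.Ioc (0:ℝ) 1) (hind : RatIndep τ)
    (hc : 1 ≤ ∑ k, |c k|) :
    ∃ lam : ℕ → ℂ,
      (∀ j, (1 : ℂ) = ∑ k, (c k : ℂ) * Complex.exp (-(lam j) * τ k)) ∧
      (Filter.Tendsto (fun j => (lam j).re) Filter.atTop (nhds 0) ∨
        ∀ j, 0 ≤ (lam j).re) :=
  stmt19_general (fun k ↦ (hτ k).1) (ratIndep_iff_linearIndependent.1 hind) (by simpa using hc)
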